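/- arXiv:2504.21542 — 2 statements merged into one kernel-verified Lean document; each statement's English description precedes it below -/
import Mathlib

section
/- The Baumslag–Solitar group BS(m, n) with 0 < n ≤ |m| is residually a finite p-group for the prime p if and only if (n = 1 and m ≡ 1 mod p) or (m = n = p^r for some r ≥ 0) or (p = 2 and m = −n = 2^r for some r ≥ 1). -/
def ResiduallyFiniteP (p : ℕ) (G : Type*) [Group G] : Prop :=
  ∀ g : G, g ≠ 1 → ∃ (Q : Type) (_ : Group Q) (f : G →* Q),
    Finite Q ∧ IsPGroup p Q ∧ f g ≠ 1

/-! ### Free groups are residually finite-`p` -/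

/-- Sequences over `R` that vanish from index `K` on. -/
abbrev TruncSeq (R : Type) [CommRing R] (K : ℕ) : Type := {f : ℕ → R // ∀ i, K ≤ i → f i = 0}

theorem TruncSeq.finite (R : Type) [CommRing R] [Finite R] (K : ℕ) : Finite (TruncSeq R K) := by
  refine Finite.of_injective (β := Fin K → R) (fun f i => f.1 i) ?_
  intro f g h
  apply Subtype.ext
  funext i
  by_cases hi : i < K
  · exact congrFun h ⟨i, hi⟩
  · rw [f.2 i (not_lt.mp hi), g.2 i (not_lt.mp hi)]

/-- The transvection-like map `f ↦ (i ↦ f i + e * c i * f (i+1))`. -/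
def transv {R : Type} [CommRing R] (K : ℕ) (c : ℕ → R) (e : ℤ) (f : TruncSeq R K) :
    TruncSeq R K :=
  ⟨fun i => f.1 i + e * c i * f.1 (i + 1), fun i hi => by
    simp [f.2 i hi, f.2 (i + 1) (by omega)]⟩

theorem transv_add {R : Type} [CommRing R] (K : ℕ) (c : ℕ → R) (hc : ∀ i, c i * c (i + 1) = 0)
    (e e' : ℤ) (f : TruncSeq R K) :
    transv K c (e + e') f = transv K c e (transv K c e' f) := by
  apply Subtype.ext
  funext i
  simp only [transv]
  push_cast
  linear_combination (-(e : R) * e' * f.1 (i + 1 + 1)) * hc i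

theorem transv_zero {R : Type} [CommRing R] (K : ℕ) (c : ℕ → R) (f : TruncSeq R K) :
    transv K c 0 f = f := by
  apply Subtype.ext
  funext i
  simp [transv]

/-- The one-parameter group of the maps `transv`. -/
def transvHom {R : Type} [CommRing R] (K : ℕ) (c : ℕ → R) (hc : ∀ i, c i * c (i + 1) = 0) :
    Multiplicative ℤ →* Equiv.Perm (TruncSeq R K) where
  toFun e :=
    { toFun := transv K c e.toAdd
      invFun := transv K c (-e.toAdd)
      left_inv := fun f => by rw [← transv_add K c hc]; simp [transv_zero]
      right_inv := fun f => by rw [← transv_add K c hc]; simp [transv_zero] }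
  map_one' := by ext1 f; exact transv_zero K c f
  map_mul' a b := by ext1 f; exact transv_add K c hc _ _ f

/-- Unipotence. -/
def Unip {R : Type} [CommRing R] {K : ℕ} (g : Equiv.Perm (TruncSeq R K)) : Prop :=
  (∀ f f' f'' : TruncSeq R K, (∀ i, f''.1 i = f.1 i + f'.1 i) →
    ∀ i, (g f'').1 i = (g f).1 i + (g f').1 i) ∧
  ∀ (d : ℕ) (f : TruncSeq R K), (∀ i, d + 1 ≤ i → f.1 i = 0) → ∀ i, d ≤ i → (g f).1 i = f.1 i

theorem Unip.one {R : Type} [CommRing R] {K : ℕ} : Unip (1 : Equiv.Perm (TruncSeq R K)) :=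
  ⟨fun _ _ _ h => h, fun _ _ _ _ _ => rfl⟩

theorem Unip.mul {R : Type} [CommRing R] {K : ℕ} {g h : Equiv.Perm (TruncSeq R K)}
    (hg : Unip g) (hh : Unip h) : Unip (g * h) := by
  refine ⟨fun f f' f'' H => hg.1 _ _ _ (hh.1 _ _ _ H), fun d f hf i hi => ?_⟩
  rw [Equiv.Perm.mul_apply, hg.2 d _ _ i hi, hh.2 d f hf i hi]
  intro j hj
  rw [hh.2 d f hf j (by omega), hf j hj]

theorem Unip.pow {R : Type} [CommRing R] {K : ℕ} {g : Equiv.Perm (TruncSeq R K)}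
    (hg : Unip g) (k : ℕ) : Unip (g ^ k) := by
  induction k with
  | zero => simpa using Unip.one
  | succ k ih => rw [pow_succ]; exact ih.mul hg

theorem Unip.transvHom {R : Type} [CommRing R] (K : ℕ) (c : ℕ → R)
    (hc : ∀ i, c i * c (i + 1) = 0) (e : Multiplicative ℤ) : Unip (transvHom K c hc e) := by
  refine ⟨fun f f' f'' h i => ?_, fun d f hf i hi => ?_⟩
  · simp only [_root_.transvHom, MonoidHom.coe_mk, OneHom.coe_mk, Equiv.coe_fn_mk, transv]
    rw [h, h]; ring
  · simp only [_root_.transvHom, MonoidHom.coe_mk, OneHom.coe_mk, Equiv.coe_fn_mk, transv]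
    rw [hf (i + 1) (by omega)]; ring

theorem Unip.pow_eq {q : ℕ} {K : ℕ} {g : Equiv.Perm (TruncSeq (ZMod q) K)}
    (hg : Unip g) (d : ℕ) : ∀ f : TruncSeq (ZMod q) K, (∀ i, d ≤ i → f.1 i = 0) →
    (g ^ (q ^ d)) f = f := by
  induction d with
  | zero =>
    intro f hf
    have hf0 : ∀ i, f.1 i = 0 := fun i => hf i (Nat.zero_le _)
    have h := hg.1 f f f (by intro i; simp [hf0])
    apply Subtype.ext
    funext i
    have := h i
    simpa [hf0 i] using this
  | succ d ih =>
    intro f hf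
    set h := g ^ (q ^ d) with hh
    have hU : Unip h := hg.pow _
    let u : TruncSeq (ZMod q) K := ⟨fun i => (h f).1 i - f.1 i, fun i hi => by
      beta_reduce; rw [(h f).2 i hi, f.2 i hi, sub_zero]⟩
    have hu : h u = u := ih u (fun i hi => by
      change (h f).1 i - f.1 i = 0
      rw [hU.2 d f hf i hi, sub_self])
    have key : ∀ (e : ℕ), ∀ i, ((h ^ e) f).1 i = f.1 i + e * u.1 i := by
      intro e
      induction e with
      | zero => intro i; simp
      | succ e ihe =>
        intro i
        have hadd : ∀ e : ℕ, ∀ w : TruncSeq (ZMod q) K, (∀ i, w.1 i = f.1 i + e * u.1 i) →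
            ∀ i, (h w).1 i = (h f).1 i + e * u.1 i := by
          intro e
          induction e with
          | zero =>
            intro w hw i
            have : w = f := Subtype.ext (funext fun i => by simpa using hw i)
            simp [this]
          | succ e ih2 =>
            intro w hw i
            let w' : TruncSeq (ZMod q) K := ⟨fun i => f.1 i + e * u.1 i, fun i hi => by
              beta_reduce; rw [f.2 i hi, u.2 i hi]; simp⟩
            have h1 := hU.1 w' u w (fun i => by
              rw [hw]; push_cast; change _ = (f.1 i + e * u.1 i) + _; ring) i
            rw [h1, ih2 w' (fun i => rfl) i, hu]; push_cast; ring
        rw [pow_succ', Equiv.Perm.mul_apply, hadd e _ ihe i]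
        push_cast
        have : u.1 i = (h f).1 i - f.1 i := rfl
        linear_combination -this
    rw [pow_succ, pow_mul]
    apply Subtype.ext
    funext i
    rw [key q i]; simp

theorem coprodI_residually (p : ℕ) (hp : p.Prime) (X : Type) :
    ResiduallyFiniteP p (Monoid.CoprodI (fun _ : X => Multiplicative ℤ)) := by
  classical
  intro g hg
  let w : Monoid.CoprodI.Word (fun _ : X => Multiplicative ℤ) := Monoid.CoprodI.Word.equiv g
  have hwg : w.prod = g := Monoid.CoprodI.Word.equiv.symm_apply_apply g
  let L := w.toList
  let E : ℤ := (L.map (fun l => Multiplicative.toAdd l.2)).prod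
  have hE : E ≠ 0 := by
    intro h0
    rw [List.prod_eq_zero_iff] at h0
    obtain ⟨l, hl, h⟩ := List.mem_map.mp h0
    exact w.ne_one l hl h
  -- choose the modulus
  obtain ⟨N, hN⟩ : ∃ N : ℕ, ¬ ((p ^ N : ℕ) : ℤ) ∣ E := by
    refine ⟨E.natAbs, fun h => ?_⟩
    have h1 := Int.natAbs_dvd_natAbs.mpr h
    rw [Int.natAbs_natCast] at h1
    have h2 := Nat.le_of_dvd (Int.natAbs_pos.mpr hE) h1
    exact absurd h2 (not_le.mpr (Nat.lt_pow_self hp.one_lt))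
  set q := p ^ N with hq
  have : NeZero q := ⟨pow_ne_zero _ hp.ne_zero⟩
  let K := L.length + 1
  let c : X → ℕ → ZMod q := fun x i => if (L[i]?).map Sigma.fst = some x then 1 else 0
  have hc : ∀ x i, c x i * c x (i + 1) = 0 := by
    intro x i
    by_contra hne
    simp only [c] at hne
    split_ifs at hne with h1 h2 <;> simp at hne
    obtain ⟨l1, hl1, h1'⟩ := Option.map_eq_some_iff.mp h1
    obtain ⟨l2, hl2, h2'⟩ := Option.map_eq_some_iff.mp h2
    obtain ⟨b1, e1⟩ := List.getElem?_eq_some_iff.mp hl1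
    obtain ⟨b2, e2⟩ := List.getElem?_eq_some_iff.mp hl2
    have := (List.isChain_iff_getElem.mp w.chain_ne) i b2
    apply this
    change (L[i]).1 = (L[i+1]).1
    rw [e1, e2, h1', h2']
  let F : Monoid.CoprodI (fun _ : X => Multiplicative ℤ) →* Equiv.Perm (TruncSeq (ZMod q) K) :=
    Monoid.CoprodI.lift (fun x => transvHom K (c x) (hc x))
  have hU : ∀ y, Unip (F y) := by
    intro y
    induction y using Monoid.CoprodI.induction_on with
    | one => rw [map_one]; exact Unip.one
    | of i m => simp only [F, Monoid.CoprodI.lift_of]; exact Unip.transvHom _ _ _ _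
    | mul x y hx hy => rw [map_mul]; exact hx.mul hy
  have hfin : Finite (TruncSeq (ZMod q) K) := TruncSeq.finite _ _
  refine ⟨F.range, inferInstance, F.rangeRestrict, inferInstance, ?_, ?_⟩
  · rw [isPGroup_iff_pow_pow_eq_one]
    rintro ⟨_, y, rfl⟩
    refine ⟨N * K, ?_⟩
    apply Subtype.ext
    rw [pow_mul, ← hq]
    ext1 f
    exact (hU y).pow_eq K f f.2
  · intro h
    have hF : F g = 1 := congrArg Subtype.val h
    -- evaluate on the last basis vector
    have key : ∀ (L' : List (Σ _ : X, Multiplicative ℤ)) (j : ℕ),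
        (∀ i (hi : i < L'.length), c (L'[i]).1 (j + i) = 1) → ∀ f : TruncSeq (ZMod q) K,
        (∀ i, i < j + L'.length → f.1 i = 0) → f.1 (j + L'.length) = 1 →
        (∀ i, i < j → ((F ((L'.map (fun l => Monoid.CoprodI.of (M := fun _ : X => Multiplicative ℤ) (i := l.1) l.2)).prod)) f).1 i = 0) ∧
        ((F ((L'.map (fun l => Monoid.CoprodI.of (M := fun _ : X => Multiplicative ℤ) (i := l.1) l.2)).prod)) f).1 j =
          (((L'.map (fun l => Multiplicative.toAdd l.2)).prod : ℤ) : ZMod q) := by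
      intro L'
      induction L' with
      | nil => intro j _ f h1 h2; simp at h1 h2 ⊢; exact ⟨h1, h2⟩
      | cons l L' ih =>
        intro j hj f h1 h2
        obtain ⟨h3, h4⟩ := ih (j + 1) (fun i hi => by
          have := hj (i + 1) (by simpa using hi)
          simp only [List.getElem_cons_succ] at this
          rw [← this]; congr 1; omega) f
          (fun i hi => h1 i (by simp; omega)) (by
            rw [← h2]; apply congrArg f.1; rw [List.length_cons]; omega)
        set f' := (F ((L'.map (fun l => Monoid.CoprodI.of (M := fun _ : X => Multiplicative ℤ) (i := l.1) l.2)).prod)) f with hf'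
        have hstep : ∀ i, ((F (((l :: L').map (fun l => Monoid.CoprodI.of (M := fun _ : X => Multiplicative ℤ) (i := l.1) l.2)).prod)) f).1 i
            = f'.1 i + (Multiplicative.toAdd l.2 : ℤ) * c l.1 i * f'.1 (i + 1) := by
          intro i
          rw [List.map_cons, List.prod_cons, map_mul, Equiv.Perm.mul_apply, ← hf']
          simp only [F, Monoid.CoprodI.lift_of]
          rfl
        have hcl : c l.1 j = 1 := hj 0 (by simp)
        refine ⟨fun i hi => ?_, ?_⟩
        · rw [hstep, h3 i (by omega), h3 (i + 1) (by omega)]; simp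
        · rw [hstep, h3 j (by omega), h4, hcl]; simp
    let f0 : TruncSeq (ZMod q) K := ⟨fun i => if i = L.length then 1 else 0, fun i hi => by
      beta_reduce; rw [if_neg]; simp only [K] at hi; omega⟩
    have h5 := (key L 0 (fun i hi => by
      simp only [c, zero_add]; rw [if_pos]; rw [List.getElem?_eq_getElem hi]; rfl) f0
      (fun i hi => by simp only [f0]; rw [if_neg]; omega) (by simp [f0])).2
    have h6 : (L.map (fun l => Monoid.CoprodI.of (M := fun _ : X => Multiplicative ℤ) (i := l.1) l.2)).prod = g := hwg
    rw [h6, hF, Equiv.Perm.one_apply] at h5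
    have hL0 : L.length ≠ 0 := by
      intro h0
      apply hg
      rw [← h6, List.length_eq_zero_iff.mp h0]; simp
    have h7 : f0.1 0 = 0 := by simp only [f0]; rw [if_neg]; omega
    rw [h7] at h5
    exact hN ((ZMod.intCast_zmod_eq_zero_iff_dvd E q).mp h5.symm)

theorem ResiduallyFiniteP.of_injective {p : ℕ} {G H : Type*} [Group G] [Group H]
    (h : ResiduallyFiniteP p H) (φ : G →* H) (hφ : Function.Injective φ) :
    ResiduallyFiniteP p G := by
  intro g hg
  obtain ⟨Q, i, f, h1, h2, h3⟩ := h (φ g) (fun h0 => hg (hφ (by rw [h0, map_one])))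
  exact ⟨Q, i, f.comp φ, h1, h2, h3⟩

theorem freeGroup_residually (p : ℕ) (hp : p.Prime) (X : Type) :
    ResiduallyFiniteP p (FreeGroup X) := by
  refine (coprodI_residually p hp X).of_injective
    (FreeGroup.lift fun i => Monoid.CoprodI.of (M := fun _ : X => Multiplicative ℤ) (i := i)
      (Multiplicative.ofAdd 1)) ?_
  let back : Monoid.CoprodI (fun _ : X => Multiplicative ℤ) →* FreeGroup X :=
    Monoid.CoprodI.lift (fun i => zpowersHom _ (FreeGroup.of i))
  have : Function.LeftInverse back (FreeGroup.lift fun i =>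
      Monoid.CoprodI.of (M := fun _ : X => Multiplicative ℤ) (i := i)
      (Multiplicative.ofAdd 1)) := by
    intro x
    rw [← MonoidHom.comp_apply]
    conv_rhs => rw [← MonoidHom.id_apply (FreeGroup X) x]
    congr 1
    ext i
    simp [back]
  exact this.injective

theorem semidirect_residually (p : ℕ) (hp : p.Prime) (F C : Type) [Group F] [Group C] [Finite C]
    (hC : IsPGroup p C) (φ : C →* MulAut F) (hF : ResiduallyFiniteP p F) :
    ResiduallyFiniteP p (F ⋊[φ] C) := by
  have : Fact p.Prime := ⟨hp⟩
  intro g hg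
  by_cases hr : g.right = 1
  · have hl : g.left ≠ 1 := fun h => hg (SemidirectProduct.ext h hr)
    obtain ⟨Q, i, f, h1, h2, h3⟩ := hF g.left hl
    let fn : F →* (C → Q) :=
      { toFun := fun w c => f (φ c⁻¹ w)
        map_one' := by ext; simp
        map_mul' := by intros; ext; simp }
    let Φ : F ⋊[φ] C →* (C → Q) ⋊[mulAutArrow] C :=
      SemidirectProduct.map fn (MonoidHom.id C) (by
        intro c
        ext w d
        change f (φ d⁻¹ (φ c w)) = f (φ (c⁻¹ * d)⁻¹ w)
        rw [← MulAut.mul_apply, ← map_mul]; simp)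
    have hfin : Finite ((C → Q) ⋊[(mulAutArrow : C →* MulAut (C → Q))] C) :=
      Finite.of_equiv _ SemidirectProduct.equivProd.symm
    refine ⟨_, inferInstance, Φ, hfin, ?_, ?_⟩
    · obtain ⟨a, ha⟩ := IsPGroup.iff_card.mp hC
      obtain ⟨b, hb⟩ := IsPGroup.iff_card.mp h2
      apply IsPGroup.of_card (n := b * Nat.card C + a)
      rw [SemidirectProduct.card, Nat.card_fun, ha, hb]
      ring
    · intro h
      apply h3
      have h4 : f (φ 1⁻¹ g.left) = 1 := congrFun (congrArg SemidirectProduct.left h) 1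
      rwa [inv_one, map_one, MulAut.one_apply] at h4
  · exact ⟨C, inferInstance, SemidirectProduct.rightHom, inferInstance, hC, hr⟩

/-! ### Baumslag–Solitar groups: basic facts -/

/-- The Baumslag–Solitar group of the statement. -/
abbrev BSG (m n : ℤ) : Type := PresentedGroup
      ({FreeGroup.of true * FreeGroup.of false ^ n * (FreeGroup.of true)⁻¹ *
          (FreeGroup.of false ^ m)⁻¹} : Set (FreeGroup Bool))

/-- The generator `a`. -/
def bsA (m n : ℤ) : BSG m n := PresentedGroup.of false

/-- The generator `t`. -/
def bsT (m n : ℤ) : BSG m n := PresentedGroup.of true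

theorem bs_rel (m n : ℤ) : bsT m n * bsA m n ^ n * (bsT m n)⁻¹ = bsA m n ^ m := by
  have h := PresentedGroup.one_of_mem (rels := ({FreeGroup.of true * FreeGroup.of false ^ n *
    (FreeGroup.of true)⁻¹ * (FreeGroup.of false ^ m)⁻¹} : Set (FreeGroup Bool)))
    (Set.mem_singleton _)
  rw [map_mul, map_inv, mul_inv_eq_one, map_mul, map_mul, map_inv, map_zpow, map_zpow] at h
  exact h

theorem bs_lift {Q : Type*} [Group Q] (m n : ℤ) (α τ : Q) (h : τ * α ^ n * τ⁻¹ = α ^ m) :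
    ∃ f : BSG m n →* Q, f (bsA m n) = α ∧ f (bsT m n) = τ := by
  have hr : ∀ r ∈ ({FreeGroup.of true * FreeGroup.of false ^ n *
    (FreeGroup.of true)⁻¹ * (FreeGroup.of false ^ m)⁻¹} : Set (FreeGroup Bool)),
      FreeGroup.lift (fun b : Bool => if b then τ else α) r = 1 := by
    intro r hr
    rw [Set.mem_singleton_iff] at hr
    subst hr
    simp [h]
  refine ⟨PresentedGroup.toGroup hr, ?_, ?_⟩
  · simp [bsA]
  · simp [bsT]

theorem bs_closure (m n : ℤ) : Subgroup.closure {bsA m n, bsT m n} = ⊤ := by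
  rw [← PresentedGroup.closure_range_of]
  congr 1
  ext x
  constructor
  · rintro (rfl | rfl)
    · exact ⟨false, rfl⟩
    · exact ⟨true, rfl⟩
  · rintro ⟨b, rfl⟩
    cases b
    · exact Or.inl rfl
    · exact Or.inr rfl

open HNNExtension in
theorem hnn_model (m n : ℤ) (hm : m ≠ 0) (hn : n ≠ 0) :
    ∃ (H : Type) (_ : Group H) (α τ : H), τ * α ^ n * τ⁻¹ = α ^ m ∧
      (∀ k : ℤ, α ^ k = 1 → k = 0) ∧
      ∀ e : ℤ, ¬ n ∣ e → ¬ m ∣ 1 → ¬ Commute (τ * α ^ e * τ⁻¹) α := by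
  let f : ℤ → (Multiplicative ℤ →* Multiplicative ℤ) := fun k => zpowGroupHom k
  have hinj : ∀ k : ℤ, k ≠ 0 → Function.Injective (f k) := by
    intro k hk x y hxy
    have h : k * x.toAdd = k * y.toAdd := by
      simpa [f, zpowGroupHom] using congrArg Multiplicative.toAdd hxy
    exact Multiplicative.toAdd.injective (mul_left_cancel₀ hk h)
  have hmem : ∀ k e : ℤ, Multiplicative.ofAdd e ∈ (f k).range → k ∣ e := by
    rintro k e ⟨x, hx⟩
    have := congrArg Multiplicative.toAdd hx
    refine ⟨x.toAdd, ?_⟩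
    simpa [f, zpowGroupHom] using this.symm
  let A := (f n).range
  let B := (f m).range
  let φ : A ≃* B := (MonoidHom.ofInjective (hinj n hn)).symm.trans
    (MonoidHom.ofInjective (hinj m hm))
  let a : Multiplicative ℤ := Multiplicative.ofAdd 1
  have hpow : ∀ k : ℤ, a ^ k = Multiplicative.ofAdd k := fun k => by
    simp [a, ← ofAdd_zsmul]
  let α : HNNExtension (Multiplicative ℤ) A B φ := of a
  refine ⟨HNNExtension (Multiplicative ℤ) A B φ, inferInstance, α, t, ?_, ?_, ?_⟩
  · rw [mul_inv_eq_iff_eq_mul]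
    have h := t_mul_of (φ := φ) (MonoidHom.ofInjective (hinj n hn) a)
    have h1 : φ (MonoidHom.ofInjective (hinj n hn) a) = MonoidHom.ofInjective (hinj m hm) a := by
      simp [φ]
    rw [h1] at h
    have h2 : ∀ k hk, ((MonoidHom.ofInjective (hinj k hk) a : (f k).range) : Multiplicative ℤ)
      = a ^ k := fun k hk => rfl
    rw [h2 n hn, h2 m hm] at h
    simpa [α, map_zpow] using h
  · intro k hk
    rw [← map_zpow] at hk
    have := of_injective φ (hk.trans (map_one of).symm)
    rw [hpow] at this
    simpa using this
  · intro e he hm1 hcomm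
    have hae : a ^ e ∉ A := fun h => he (hmem n e (by rwa [hpow] at h))
    have hae' : a ^ (-e) ∉ A := fun h => he (by
      have := hmem n (-e) (by rwa [hpow] at h); simpa using this)
    have haB : a ∉ B := fun h => hm1 (hmem m 1 h)
    let w : NormalWord.ReducedWord (Multiplicative ℤ) A B :=
      { head := 1
        toList := [(1, a ^ e), (-1, a), (1, a ^ (-e)), (-1, a⁻¹)]
        chain := by
          simp only [List.isChain_cons_cons, List.IsChain.singleton, and_true]
          refine ⟨fun h => absurd h hae, fun h => absurd h haB, fun h => absurd h hae'⟩ }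
    have hw : w.prod φ = 1 := by
      have h := hcomm.eq
      have h3 : w.prod φ = (t * α ^ e * t⁻¹) * α * (t * α ^ e * t⁻¹)⁻¹ * α⁻¹ := by
        simp only [NormalWord.ReducedWord.prod, w, List.map_cons, List.prod_cons, List.map_nil,
          List.prod_nil, map_one, map_zpow, map_inv, Units.val_one, Units.val_neg, zpow_one,
          zpow_neg, α]
        group
      rw [h3, h]; group
    have := ReducedWord.toList_eq_nil_of_mem_of_range φ w (by rw [hw]; exact one_mem _)
    simp [w] at this

theorem bs_infinite_order (m n : ℤ) (hm : m ≠ 0) (hn : n ≠ 0) (k : ℤ)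
    (hk : bsA m n ^ k = 1) : k = 0 := by
  obtain ⟨H, _, α, τ, h1, h2, -⟩ := hnn_model m n hm hn
  obtain ⟨f, hf1, hf2⟩ := bs_lift m n α τ h1
  apply h2
  rw [← hf1, ← map_zpow, hk, map_one]

theorem bs_not_commute (m n : ℤ) (hm : m ≠ 0) (hn : n ≠ 0) (e : ℤ) (he : ¬ n ∣ e)
    (hm1 : ¬ m ∣ 1) :
    ¬ Commute (bsT m n * bsA m n ^ e * (bsT m n)⁻¹) (bsA m n) := by
  obtain ⟨H, _, α, τ, h1, -, h2⟩ := hnn_model m n hm hn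
  obtain ⟨f, hf1, hf2⟩ := bs_lift m n α τ h1
  intro h
  apply h2 e he hm1
  have := h.map f
  simpa [hf1, hf2] using this

theorem bs_not_commute_two (m n : ℤ) (hm : m ≠ 0) (hn : n ≠ 0) (e : ℤ) (he : ¬ m ∣ e)
    (hn1 : ¬ n ∣ 1) :
    ¬ Commute ((bsT m n)⁻¹ * bsA m n ^ e * bsT m n) (bsA m n) := by
  obtain ⟨H, _, α, τ, h1, -, h2⟩ := hnn_model n m hn hm
  obtain ⟨f, hf1, hf2⟩ := bs_lift m n α τ⁻¹ (by rw [← h1]; group)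
  intro h
  apply h2 e he hn1
  have := h.map f
  simpa [hf1, hf2] using this

/-! ### The necessary direction -/

theorem eq_one_of_killed {p : ℕ} {G : Type*} [Group G] (h : ResiduallyFiniteP p G) (g : G)
    (hg : ∀ (Q : Type) (_ : Group Q) (f : G →* Q), Finite Q → IsPGroup p Q → f g = 1) :
    g = 1 := by
  by_contra hne
  obtain ⟨Q, i, f, h1, h2, h3⟩ := h g hne
  exact h3 (hg Q i f h1 h2)

theorem conj_pow_iter {Q : Type*} [Group Q] (α τ : Q) (m : ℤ) (h : τ * α * τ⁻¹ = α ^ m) (j : ℕ) :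
    τ ^ j * α * (τ ^ j)⁻¹ = α ^ (m ^ j) := by
  induction j with
  | zero => simp
  | succ j ih =>
    have : τ ^ (j + 1) * α * (τ ^ (j + 1))⁻¹ = τ ^ j * (τ * α * τ⁻¹) * (τ ^ j)⁻¹ := by
      rw [pow_succ]; group
    rw [this, h, ← conj_zpow, ih, ← zpow_mul, pow_succ]

/-- In a `p`-group, `τ α τ⁻¹ = α^m` with `m ≢ 1 mod p` forces `α = 1`. -/
theorem pgroup_conj_eq_one {p : ℕ} (hp : p.Prime) {Q : Type*} [Group Q] (hQ : IsPGroup p Q)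
    (α τ : Q) (m : ℤ) (h : τ * α * τ⁻¹ = α ^ m) (hm : ¬ (p : ℤ) ∣ m - 1) : α = 1 := by
  have : Fact p.Prime := ⟨hp⟩
  by_contra hα
  obtain ⟨j, hj⟩ := isPGroup_iff_pow_pow_eq_one.mp hQ τ
  have h1 := conj_pow_iter α τ m h (p ^ j)
  rw [hj] at h1
  have h2 : α ^ (m ^ p ^ j - 1) = 1 := by
    rw [zpow_sub_one, ← h1]; simp
  have h3 := orderOf_dvd_iff_zpow_eq_one.mpr h2
  have h4 : (p : ℤ) ∣ m ^ p ^ j - 1 :=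
    (Int.natCast_dvd_natCast.mpr (hQ.dvd_orderOf hα)).trans h3
  apply hm
  rw [← ZMod.intCast_zmod_eq_zero_iff_dvd] at h4 ⊢
  push_cast at h4 ⊢
  rwa [ZMod.pow_card_pow] at h4

/-- In a `p`-group, `τ y^b τ⁻¹ = y^(p c)` with `p ∤ b` forces `y = 1`. -/
theorem pgroup_val_eq_one {p : ℕ} (hp : p.Prime) {Q : Type*} [Group Q] (hQ : IsPGroup p Q)
    (y τ : Q) (b c : ℤ) (hb : ¬ (p : ℤ) ∣ b) (h : τ * y ^ b * τ⁻¹ = y ^ ((p : ℤ) * c)) :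
    y = 1 := by
  have : Fact p.Prime := ⟨hp⟩
  obtain ⟨k, hk⟩ := IsPGroup.iff_orderOf.mp hQ y
  cases k with
  | zero => simpa using hk
  | succ k =>
    exfalso
    have h1 : (τ * y ^ b * τ⁻¹) ^ (p ^ k) = 1 := by
      rw [h, ← zpow_natCast, ← zpow_mul]
      rw [← orderOf_dvd_iff_zpow_eq_one, hk]
      refine ⟨c, ?_⟩
      push_cast; ring
    rw [conj_pow, conj_eq_one_iff, ← zpow_natCast, ← zpow_mul, ← orderOf_dvd_iff_zpow_eq_one,
      hk] at h1
    push_cast at h1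
    rw [pow_succ, mul_comm b] at h1
    exact hb (Int.dvd_of_mul_dvd_mul_left (pow_ne_zero _ (by exact_mod_cast hp.ne_zero)) h1)

theorem pgroup_normalize {p : ℕ} (hp : p.Prime) {Q : Type*} [Group Q] (hQ : IsPGroup p Q)
    (y τ : Q) (b c : ℤ) (hb : ¬ (p : ℤ) ∣ b) (h : τ * y ^ b * τ⁻¹ = y ^ c) :
    ∃ l : ℤ, τ * y * τ⁻¹ = y ^ l := by
  have : Fact p.Prime := ⟨hp⟩
  obtain ⟨k, hk⟩ := IsPGroup.iff_orderOf.mp hQ y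
  have hcop : IsCoprime b ((p ^ k : ℕ) : ℤ) := by
    push_cast
    apply IsCoprime.pow_right
    exact ((Nat.prime_iff_prime_int.mp hp).coprime_iff_not_dvd.mpr hb).symm
  obtain ⟨u, v, huv⟩ := hcop
  have hy : y = (y ^ b) ^ u := by
    have h0 : y ^ (v * ((p ^ k : ℕ) : ℤ)) = 1 := by
      rw [← orderOf_dvd_iff_zpow_eq_one, hk]; exact Dvd.intro_left v rfl
    calc y = y ^ (u * b + v * ((p ^ k : ℕ) : ℤ)) := by rw [huv, zpow_one]
      _ = _ := by rw [zpow_add, h0, mul_one, mul_comm, zpow_mul]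
  refine ⟨c * u, ?_⟩
  rw [zpow_mul, ← h, conj_zpow, ← hy]

theorem bs_necessary (p : ℕ) (hp : p.Prime) (m n : ℤ) (hm0 : m ≠ 0)
    (hn : 0 < n) (hnm : n ≤ |m|) (hR : ResiduallyFiniteP p (BSG m n)) :
      (n = 1 ∧ (p : ℤ) ∣ (m - 1)) ∨
      (∃ r : ℕ, m = n ∧ m = (p : ℤ) ^ r) ∨
      (p = 2 ∧ ∃ r : ℕ, 1 ≤ r ∧ m = -n ∧ n = 2 ^ r) := by
  have hrel : ∀ (Q : Type) (_ : Group Q) (f : BSG m n →* Q),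
      f (bsT m n) * f (bsA m n) ^ n * (f (bsT m n))⁻¹ = f (bsA m n) ^ m := by
    intro Q _ f
    have := congrArg f (bs_rel m n)
    simpa using this
  rcases eq_or_ne n 1 with h1 | h1
  · refine Or.inl ⟨h1, ?_⟩
    by_contra hdvd
    have := eq_one_of_killed hR (bsA m n) (fun Q _ f _ hQ =>
      pgroup_conj_eq_one hp hQ _ (f (bsT m n)) m (by
        have h5 : f (bsA m n) ^ n = f (bsA m n) := by
          conv_rhs => rw [← zpow_one (f (bsA m n))]
          exact congrArg (fun z : ℤ => f (bsA m n) ^ z) h1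
        have h6 := hrel Q _ f
        rwa [h5] at h6) hdvd)
    have := bs_infinite_order m n hm0 hn.ne' 1 (by simpa using this)
    omega
  · right
    have hpz : Prime (p : ℤ) := Nat.prime_iff_prime_int.mp hp
    have hp0 : (p : ℤ) ≠ 0 := hpz.ne_zero
    have hn1 : ¬ n ∣ 1 := fun h => h1 (Int.eq_one_of_dvd_one hn.le h)
    have hm1 : ¬ m ∣ 1 := fun h => by
      have := Int.le_of_dvd one_pos ((abs_dvd m 1).mpr h)
      omega
    have hfin : ∀ z : ℤ, z ≠ 0 → ∃ (s : ℕ) (z' : ℤ), z = (p : ℤ) ^ s * z' ∧ ¬ (p : ℤ) ∣ z' := by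
      intro z hz
      have hfm : FiniteMultiplicity (p : ℤ) z := Int.finiteMultiplicity_iff.mpr
        ⟨by simpa using hp.ne_one, hz⟩
      obtain ⟨c, hc1, hc2⟩ := hfm.exists_eq_pow_mul_and_not_dvd
      exact ⟨_, c, hc1, hc2⟩
    obtain ⟨s, n', hn', hn'p⟩ := hfin n hn.ne'
    obtain ⟨u, m', hm', hm'p⟩ := hfin m hm0
    have hsu : s = u := by
      rcases lt_trichotomy s u with hlt | heq | hlt
      · exfalso
        obtain ⟨d, rfl⟩ := Nat.exists_eq_add_of_lt hlt
        have hk := eq_one_of_killed hR (bsA m n ^ ((p : ℤ) ^ s)) (fun Q _ f _ hQ => by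
          rw [map_zpow]
          refine pgroup_val_eq_one hp hQ _ (f (bsT m n)) n' ((p : ℤ) ^ d * m') hn'p ?_
          rw [← zpow_mul, ← hn', hrel Q _ f, ← zpow_mul]
          congr 1
          rw [hm']; ring)
        exact pow_ne_zero s hp0 (bs_infinite_order m n hm0 hn.ne' _ hk)
      · exact heq
      · exfalso
        obtain ⟨d, rfl⟩ := Nat.exists_eq_add_of_lt hlt
        have hk := eq_one_of_killed hR (bsA m n ^ ((p : ℤ) ^ u)) (fun Q _ f _ hQ => by
          rw [map_zpow]
          refine pgroup_val_eq_one hp hQ _ (f (bsT m n))⁻¹ m' ((p : ℤ) ^ d * n') hm'p ?_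
          have he : (p : ℤ) ^ u * ((p : ℤ) * ((p : ℤ) ^ d * n')) = n := by rw [hn']; ring
          rw [← zpow_mul, ← hm', ← hrel Q _ f, ← zpow_mul, he]
          group)
        exact pow_ne_zero u hp0 (bs_infinite_order m n hm0 hn.ne' _ hk)
    subst hsu
    have hn_dvd : n ∣ (p : ℤ) ^ s := by
      by_contra hnd
      apply bs_not_commute m n hm0 hn.ne' _ hnd hm1
      rw [← commutatorElement_eq_one_iff_commute]
      refine eq_one_of_killed hR _ (fun Q _ f _ hQ => ?_)
      rw [map_commutatorElement, commutatorElement_eq_one_iff_commute]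
      obtain ⟨l, hl⟩ := pgroup_normalize hp hQ (f (bsA m n) ^ ((p : ℤ) ^ s)) (f (bsT m n)) n' m'
        hn'p (by rw [← zpow_mul, ← zpow_mul, ← hn', ← hm', hrel Q _ f])
      rw [map_mul, map_mul, map_inv, map_zpow, hl]
      exact ((Commute.refl _).zpow_left _).zpow_left _
    have hm_dvd : m ∣ (p : ℤ) ^ s := by
      by_contra hnd
      apply bs_not_commute_two m n hm0 hn.ne' _ hnd hn1
      rw [← commutatorElement_eq_one_iff_commute]
      refine eq_one_of_killed hR _ (fun Q _ f _ hQ => ?_)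
      rw [map_commutatorElement, commutatorElement_eq_one_iff_commute]
      obtain ⟨l, hl⟩ := pgroup_normalize hp hQ (f (bsA m n) ^ ((p : ℤ) ^ s)) (f (bsT m n))⁻¹ m' n'
        hm'p (by rw [← zpow_mul, ← zpow_mul, ← hn', ← hm', ← hrel Q _ f]; group)
      rw [inv_inv] at hl
      rw [map_mul, map_mul, map_inv, map_zpow, hl]
      exact ((Commute.refl _).zpow_left _).zpow_left _
    have hpos : (0 : ℤ) < (p : ℤ) ^ s := by
      have := hp.pos; positivity
    have hns : n = (p : ℤ) ^ s := by
      apply Int.dvd_antisymm hn.le hpos.le hn_dvd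
      exact ⟨n', hn'⟩
    have hms : |m| = n := by
      apply le_antisymm _ hnm
      rw [hns]
      exact Int.le_of_dvd hpos ((abs_dvd _ _).mpr hm_dvd)
    rcases abs_choice m with h | h
    · left
      exact ⟨s, by omega, by omega⟩
    · right
      have hmn : m = -n := by omega
      have hp2 : p = 2 := by
        by_contra hne
        have hk := eq_one_of_killed hR (bsA m n ^ n) (fun Q _ f _ hQ => by
          rw [map_zpow]
          refine pgroup_conj_eq_one hp hQ _ (f (bsT m n)) (-1) ?_ ?_
          · rw [hrel Q _ f, ← zpow_mul]; congr 1; rw [hmn]; ring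
          · intro hd
            have h2 : (p : ℤ) ∣ 2 := by
              rw [← dvd_neg]; simpa using hd
            have h3 : p ∣ 2 := by exact_mod_cast h2
            exact hne ((Nat.prime_dvd_prime_iff_eq hp Nat.prime_two).mp h3))
        exact hn.ne' (bs_infinite_order m n hm0 hn.ne' _ hk)
      refine ⟨hp2, s, ?_, hmn, by rw [hns, hp2]; rfl⟩
      rcases Nat.eq_zero_or_pos s with h0 | h0
      · rw [h0, pow_zero] at hns; exact absurd hns h1
      · exact h0

/-! ### The sufficient direction -/

theorem exists_pow_not_dvd (p : ℕ) (hp : p.Prime) (k : ℤ) (hk : k ≠ 0) :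
    ∃ N : ℕ, ¬ ((p ^ N : ℕ) : ℤ) ∣ k := by
  refine ⟨k.natAbs, fun h => ?_⟩
  have h1 := Int.natAbs_dvd_natAbs.mpr h
  rw [Int.natAbs_natCast] at h1
  have h2 := Nat.le_of_dvd (Int.natAbs_pos.mpr hk) h1
  exact absurd h2 (not_le.mpr (Nat.lt_pow_self hp.one_lt))

/-- An element survives in some finite `p`-group quotient. -/
def Survives (p : ℕ) {G : Type*} [Group G] (g : G) : Prop :=
  ∃ (Q : Type) (_ : Group Q) (f : G →* Q), Finite Q ∧ IsPGroup p Q ∧ f g ≠ 1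

theorem isPGroup_zmod (p : ℕ) (N : ℕ) : IsPGroup p (Multiplicative (ZMod (p ^ N))) := by
  apply IsPGroup.of_card (n := N)
  rw [Nat.card_congr Multiplicative.toAdd, Nat.card_zmod]

theorem survives_a (p : ℕ) (hp : p.Prime) (m n ε : ℤ) (hm : m = n * ε) (hε : (p : ℤ) ∣ ε - 1)
    (k : ℤ) (hk : k ≠ 0) : Survives p (bsA m n ^ k) := by
  have : Fact p.Prime := ⟨hp⟩
  obtain ⟨N, hN⟩ := exists_pow_not_dvd p hp k hk
  set q := p ^ N with hq
  have hq0 : NeZero q := ⟨pow_ne_zero _ hp.ne_zero⟩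
  have hpow : ((ε : ZMod q)) ^ (p ^ N) = 1 := by
    have h := dvd_sub_pow_of_dvd_sub (R := ℤ) hε N
    rw [one_pow] at h
    have h2 : ((q : ℕ) : ℤ) ∣ ε ^ p ^ N - 1 := by
      refine dvd_trans ?_ h
      rw [hq]; push_cast
      exact pow_dvd_pow _ (Nat.le_succ N)
    have h3 := (ZMod.intCast_zmod_eq_zero_iff_dvd _ q).mpr h2
    push_cast at h3
    exact sub_eq_zero.mp h3
  let u : (ZMod q)ˣ := Units.ofPowEqOne (ε : ZMod q) (p ^ N) hpow (pow_ne_zero _ hp.ne_zero)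
  have hu : (u : ZMod q) = ε := rfl
  have hupow : u ^ (p ^ N) = 1 := by ext; rw [Units.val_pow_eq_pow_val, hu, hpow]; rfl
  let φ : Subgroup.zpowers u →* MulAut (Multiplicative (ZMod q)) :=
    ((MulAutMultiplicative (ZMod q)).symm.toMonoidHom.comp
      (DistribMulAction.toAddAut (ZMod q)ˣ (ZMod q))).comp (Subgroup.subtype _)
  have hφ : ∀ x : ZMod q, φ ⟨u, Subgroup.mem_zpowers u⟩ (Multiplicative.ofAdd x) =
      Multiplicative.ofAdd (ε * x) := fun x => rfl
  let α : Multiplicative (ZMod q) ⋊[φ] Subgroup.zpowers u :=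
    SemidirectProduct.inl (Multiplicative.ofAdd 1)
  let τ : Multiplicative (ZMod q) ⋊[φ] Subgroup.zpowers u :=
    SemidirectProduct.inr ⟨u, Subgroup.mem_zpowers u⟩
  have hα : ∀ j : ℤ, α ^ j = SemidirectProduct.inl (Multiplicative.ofAdd (j : ZMod q)) := by
    intro j
    simp only [α]
    rw [← map_zpow, ← ofAdd_zsmul, zsmul_one]
  obtain ⟨f, hf1, hf2⟩ := bs_lift m n α τ (by
    rw [hα, hα]
    simp only [τ]
    rw [← map_inv, ← SemidirectProduct.inl_aut, hφ, hm]
    push_cast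
    rw [mul_comm])
  have hfin : Finite (Multiplicative (ZMod q) ⋊[φ] Subgroup.zpowers u) :=
    Finite.of_equiv _ SemidirectProduct.equivProd.symm
  refine ⟨_, inferInstance, f, hfin, ?_, ?_⟩
  · apply IsPGroup.of_card_dvd_pow (n := N + N)
    rw [SemidirectProduct.card, Nat.card_congr Multiplicative.toAdd, Nat.card_zmod,
      Nat.card_zpowers, pow_add]
    exact mul_dvd_mul dvd_rfl (orderOf_dvd_of_pow_eq_one hupow)
  · rw [map_zpow, hf1, hα]
    intro h
    rw [← map_one SemidirectProduct.inl] at h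
    have h2 := SemidirectProduct.inl_injective h
    have h3 : (k : ZMod q) = 0 := h2
    exact hN ((ZMod.intCast_zmod_eq_zero_iff_dvd k q).mp h3)

/-- Elements with nonzero exponent sum in `t` survive. -/
theorem exists_expT (p : ℕ) (m n : ℤ) (N : ℕ) :
    ∃ f : BSG m n →* Multiplicative (ZMod (p ^ N)), f (bsA m n) = 1 ∧
      f (bsT m n) = Multiplicative.ofAdd 1 :=
  bs_lift m n 1 (Multiplicative.ofAdd 1) (by simp)

theorem bs_one_normal_form (m : ℤ) (g : BSG m 1) :
    ∃ (i j : ℕ) (k : ℤ), g = (bsT m 1 ^ i)⁻¹ * bsA m 1 ^ k * bsT m 1 ^ j := by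
  have hrel : bsT m 1 * bsA m 1 * (bsT m 1)⁻¹ = bsA m 1 ^ m := by
    simpa using bs_rel m 1
  have hg : g ∈ Subgroup.closure {bsA m 1, bsT m 1} := by rw [bs_closure]; trivial
  have hA : ∀ (x : BSG m 1) (e : ℤ), (∃ (i j : ℕ) (k : ℤ),
      x = (bsT m 1 ^ i)⁻¹ * bsA m 1 ^ k * bsT m 1 ^ j) → (∃ (i j : ℕ) (k : ℤ),
      x * bsA m 1 ^ e = (bsT m 1 ^ i)⁻¹ * bsA m 1 ^ k * bsT m 1 ^ j) := by
    rintro x e ⟨i, j, k, rfl⟩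
    refine ⟨i, j, k + m ^ j * e, ?_⟩
    have h := conj_pow_iter _ _ m hrel j
    have h1 : bsT m 1 ^ j * bsA m 1 ^ e = bsA m 1 ^ (m ^ j * e) * bsT m 1 ^ j := by
      rw [← mul_inv_eq_iff_eq_mul, ← conj_zpow, h, zpow_mul]
    rw [zpow_add, mul_assoc _ (bsT m 1 ^ j), h1]
    simp only [mul_assoc]
  induction hg using Subgroup.closure_induction_right with
  | one => exact ⟨0, 0, 0, by simp⟩
  | mul_right x y _ hy ih =>
    rcases hy with rfl | rfl
    · simpa using hA x 1 ih
    · obtain ⟨i, j, k, rfl⟩ := ih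
      exact ⟨i, j + 1, k, by rw [pow_succ]; simp only [mul_assoc]⟩
  | mul_inv_cancel x y _ hy ih =>
    rcases hy with rfl | rfl
    · simpa using hA x (-1) ih
    · obtain ⟨i, j, k, rfl⟩ := ih
      cases j with
      | succ j => exact ⟨i, j, k, by rw [pow_succ]; group⟩
      | zero =>
        refine ⟨i + 1, 0, m * k, ?_⟩
        rw [zpow_mul, ← hrel, conj_zpow, pow_succ']
        group

theorem bs_suff_one (p : ℕ) (hp : p.Prime) (m : ℤ) (hm : (p : ℤ) ∣ m - 1) :
    ResiduallyFiniteP p (BSG m 1) := by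
  intro g hg
  obtain ⟨i, j, k, rfl⟩ := bs_one_normal_form m g
  by_cases hij : i = j
  · subst hij
    have hk : k ≠ 0 := by
      rintro rfl
      apply hg; simp
    obtain ⟨Q, _, f, h1, h2, h3⟩ := survives_a p hp m 1 m (by ring) hm k hk
    refine ⟨Q, _, f, h1, h2, fun h => h3 ?_⟩
    rw [map_mul, map_mul, map_inv] at h
    have h4 : (f (bsT m 1 ^ i))⁻¹ * f (bsA m 1 ^ k) * ((f (bsT m 1 ^ i))⁻¹)⁻¹ = 1 := by
      rwa [inv_inv]
    exact conj_eq_one_iff.mp h4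
  · obtain ⟨N, hN⟩ := exists_pow_not_dvd p hp ((j : ℤ) - i) (by omega)
    have : NeZero (p ^ N) := ⟨pow_ne_zero _ hp.ne_zero⟩
    obtain ⟨f, hf1, hf2⟩ := exists_expT p m 1 N
    refine ⟨_, inferInstance, f, inferInstance, isPGroup_zmod p N, fun h => hN ?_⟩
    rw [map_mul, map_mul, map_inv, map_pow, map_pow, map_zpow, hf1, hf2, one_zpow, mul_one,
      ← ofAdd_nsmul, ← ofAdd_nsmul, ← ofAdd_neg, ← ofAdd_add] at h
    have h2 : -(i • (1 : ZMod (p ^ N))) + j • (1 : ZMod (p ^ N)) = 0 := h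
    rw [← ZMod.intCast_zmod_eq_zero_iff_dvd]
    push_cast
    rw [← h2, nsmul_one, nsmul_one]; ring

theorem zmod_hom {Q : Type*} [Group Q] (q : ℕ) (x : Q) (hx : x ^ q = 1) :
    ∃ β : Multiplicative (ZMod q) →* Q, β (Multiplicative.ofAdd 1) = x := by
  let F : ℤ →+ Additive Q := MonoidHom.toAdditiveRight (zpowersHom _ x)
  have hF : ∀ k : ℤ, F k = Additive.ofMul (x ^ k) := fun k => rfl
  have h0 : F (q : ℤ) = 0 := by
    rw [hF, zpow_natCast, hx]; rfl
  refine ⟨AddMonoidHom.toMultiplicativeLeft (ZMod.lift q ⟨F, h0⟩), ?_⟩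
  change Additive.toMul (ZMod.lift q ⟨F, h0⟩ (1 : ZMod q)) = x
  have h1 : (1 : ZMod q) = ((1 : ℤ) : ZMod q) := by simp
  rw [h1, ZMod.lift_coe]
  change Additive.toMul (F 1) = x
  rw [hF, zpow_one]; rfl

theorem bs_suff_pow (p : ℕ) (hp : p.Prime) (r : ℕ) (m n ε : ℤ) (hn : n = ((p ^ r : ℕ) : ℤ))
    (hm : m = n * ε) (hε1 : ε * ε = 1) (hε : (p : ℤ) ∣ ε - 1) :
    ResiduallyFiniteP p (BSG m n) := by
  intro g hg
  have hr0 : NeZero (p ^ r) := ⟨pow_ne_zero _ hp.ne_zero⟩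
  let C : Type := Multiplicative (ZMod (p ^ r))
  let N : Subgroup (BSG m n) := Subgroup.zpowers (bsA m n ^ n)
  by_cases hgN : g ∈ N
  · obtain ⟨k, hk⟩ := Subgroup.mem_zpowers_iff.mp hgN
    rw [← zpow_mul] at hk
    subst hk
    refine survives_a p hp m n ε hm hε _ ?_
    intro h0
    apply hg
    rw [h0, zpow_zero]
  · let φ : C →* MulAut (FreeGroup C) :=
      { toFun := fun c => FreeGroup.freeGroupCongr (Equiv.mulLeft c)
        map_one' := by
          ext1 x
          simp
        map_mul' := fun c d => by
          ext1 x
          rw [MulAut.mul_apply]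
          simp only [FreeGroup.freeGroupCongr_apply]
          rw [FreeGroup.map.comp]
          congr 2
          funext y
          simp }
    have hφ : ∀ c d : C, φ c (FreeGroup.of d) = FreeGroup.of (c * d) := fun c d => by
      simp [φ]
    have hN : N.Normal := by
      have hkey : ∀ x : BSG m n, x * bsA m n ^ n * x⁻¹ ∈ N → ∀ y ∈ N, x * y * x⁻¹ ∈ N := by
        intro x hx y hy
        obtain ⟨k, rfl⟩ := Subgroup.mem_zpowers_iff.mp hy
        have h9 : (x * bsA m n ^ n * x⁻¹) ^ k = x * (bsA m n ^ n) ^ k * x⁻¹ := conj_zpow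
        have h10 := N.zpow_mem hx k
        rwa [h9] at h10
      have hnorm : ∀ x : BSG m n, x * bsA m n ^ n * x⁻¹ ∈ N → x⁻¹ * bsA m n ^ n * x ∈ N →
          x ∈ Subgroup.normalizer (N : Set (BSG m n)) := by
        intro x h1 h2
        rw [Subgroup.mem_normalizer_iff]
        intro y
        refine ⟨hkey x h1 y, fun h => ?_⟩
        have h3 := hkey x⁻¹ (by rwa [inv_inv]) _ h
        have h4 : x⁻¹ * (x * y * x⁻¹) * x⁻¹⁻¹ = y := by group
        rwa [h4] at h3
      have hm2 : bsA m n ^ m = (bsA m n ^ n) ^ ε := by rw [← zpow_mul]; congr 1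
      have hT' : (bsT m n)⁻¹ * bsA m n ^ n * bsT m n = (bsA m n ^ n) ^ ε := by
        have h1 : bsT m n * (bsA m n ^ n) ^ ε * (bsT m n)⁻¹ = bsA m n ^ n := by
          rw [← conj_zpow, bs_rel, hm2, ← zpow_mul, hε1, zpow_one]
        rw [mul_inv_eq_iff_eq_mul] at h1
        rw [mul_assoc, ← h1]; group
      have hself : bsA m n ^ n ∈ N := Subgroup.mem_zpowers _
      rw [← Subgroup.normalizer_eq_top_iff, eq_top_iff, ← bs_closure, Subgroup.closure_le]
      rintro x (rfl | rfl)
      · apply hnorm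
        · have : bsA m n * bsA m n ^ n * (bsA m n)⁻¹ = bsA m n ^ n := by group
          rwa [this]
        · have : (bsA m n)⁻¹ * bsA m n ^ n * bsA m n = bsA m n ^ n := by group
          rwa [this]
      · apply hnorm
        · rw [bs_rel, hm2]; exact N.zpow_mem hself _
        · rw [hT']; exact N.zpow_mem hself _
    let c1 : C := Multiplicative.ofAdd 1
    have hc1 : ∀ k : ℤ, c1 ^ (n * k) = 1 := by
      intro k
      simp only [c1]
      rw [← ofAdd_zsmul, zsmul_one, hn]
      push_cast
      have : ((p : ZMod (p ^ r)) ^ r) = 0 := by exact_mod_cast ZMod.natCast_self (p ^ r)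
      rw [this, zero_mul]; rfl
    let α : FreeGroup C ⋊[φ] C := SemidirectProduct.inr c1
    let τ : FreeGroup C ⋊[φ] C := SemidirectProduct.inl (FreeGroup.of 1)
    have hα : ∀ k : ℤ, α ^ (n * k) = 1 := fun k => by
      simp only [α]; rw [← map_zpow, hc1, map_one]
    obtain ⟨Ψ, hΨ1, hΨ2⟩ := bs_lift m n α τ (by
      have h1 := hα 1
      rw [mul_one] at h1
      rw [h1, hm, hα]; simp)
    -- the map back
    let π : BSG m n →* BSG m n ⧸ N := QuotientGroup.mk' N
    have hπ : π (bsA m n) ^ (p ^ r) = 1 := by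
      rw [← zpow_natCast, ← hn, ← map_zpow]
      exact (QuotientGroup.eq_one_iff _).mpr (Subgroup.mem_zpowers _)
    obtain ⟨β, hβ⟩ : ∃ β : C →* BSG m n ⧸ N, β c1 = π (bsA m n) := zmod_hom (p ^ r) _ hπ
    let γ : FreeGroup C ⋊[φ] C →* BSG m n ⧸ N := SemidirectProduct.lift
      (FreeGroup.lift fun c => β c * π (bsT m n) * (β c)⁻¹) β (by
        intro c
        ext d
        simp [hφ, mul_assoc])
    have hγ : γ.comp Ψ = π := by
      apply MonoidHom.eq_of_eqOn_dense (bs_closure m n)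
      rintro x (rfl | rfl)
      · simp [hΨ1, γ, α, hβ]
      · simp [hΨ2, γ, τ]
    have hΨg : Ψ g ≠ 1 := by
      intro h
      apply hgN
      rw [← QuotientGroup.eq_one_iff]
      have h2 := DFunLike.congr_fun hγ g
      rw [MonoidHom.comp_apply, h, map_one] at h2
      exact h2.symm
    obtain ⟨Q, i, f, h1, h2, h3⟩ := semidirect_residually p hp (FreeGroup C) C
      (isPGroup_zmod p r) φ (freeGroup_residually p hp C) (Ψ g) hΨg
    exact ⟨Q, i, f.comp Ψ, h1, h2, h3⟩

/-- `BS(m,n) = ⟨t, a | t a^n t⁻¹ = a^m⟩`; generator `false` is `a`, generator `true` is `t`. -/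
theorem stmt_14 (p : ℕ) (hp : p.Prime) (m n : ℤ) (hm0 : m ≠ 0)
    (hmn : 0 < n ∧ n ≤ |m|) :
    ResiduallyFiniteP p (PresentedGroup
      ({FreeGroup.of true * FreeGroup.of false ^ n * (FreeGroup.of true)⁻¹ *
          (FreeGroup.of false ^ m)⁻¹} : Set (FreeGroup Bool))) ↔
      (n = 1 ∧ (p : ℤ) ∣ (m - 1)) ∨
      (∃ r : ℕ, m = n ∧ m = (p : ℤ) ^ r) ∨
      (p = 2 ∧ ∃ r : ℕ, 1 ≤ r ∧ m = -n ∧ n = 2 ^ r) := by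
  constructor
  · exact bs_necessary p hp m n hm0 hmn.1 hmn.2
  · rintro (⟨rfl, h⟩ | ⟨r, h1, h2⟩ | ⟨h0, r, -, h1, h2⟩)
    · exact bs_suff_one p hp m h
    · exact bs_suff_pow p hp r m n 1 (by push_cast; omega) (by omega) (by norm_num) (by simp)
    · exact bs_suff_pow p hp r m n (-1) (by rw [h2, h0]; push_cast; rfl) (by omega) (by norm_num)
        (by rw [h0]; norm_num)
end

section
/- A free product of two residually finite-p groups is residually finite-p. -/
/-- A finite `G`-set of `p`-power order type, with a function detecting `w` among
products of at most `n` letters, invariant under the letters coming from `A`. -/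
def GruenbergData (p : ℕ) {G A : Type*} [Group G] [Group A] (S : Set G) (iA : A →* G)
    (n : ℕ) (w : G) : Prop :=
  (∃ L : List G, (∀ l ∈ L, l ∈ S) ∧ L.length = n ∧ w = L.prod) ∧
  ∃ (V : Type) (_ : Finite V) (f : G →* Function.End V) (ξ : V → ZMod p) (v : V),
    (∀ g, ∃ k, f (g ^ (p ^ k)) = 1) ∧
    (∀ a y, ξ (f (iA a) y) = ξ y) ∧
    (∀ L : List G, (∀ l ∈ L, l ∈ S) → L.length < n → ξ (f L.prod v) = 0) ∧
    ξ (f w v) ≠ 0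

theorem gruenberg_step {p : ℕ} (hp : p.Prime) {G A B : Type*} [Group G] [Group A] [Group B]
    (iA : A →* G) (iB : B →* G) (S : Set G) (hS : ∀ g ∈ S, (∃ a, iA a = g) ∨ (∃ b, iB b = g))
    (hSA : ∀ a, iA a ∈ S)
    (hlift : ∀ (M : Type) [Monoid M] (f : A →* M) (g : B →* M),
      ∃ h : G →* M, (∀ a, h (iA a) = f a) ∧ (∀ b, h (iB b) = g b))
    (hgen : ∀ P : G → Prop, P 1 → (∀ a g, P g → P (iA a * g)) → (∀ b g, P g → P (iB b * g)) →
      ∀ g, P g)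
    (hA : ResiduallyFiniteP p A) (n : ℕ) (w : G) (hw : GruenbergData p S iA n w)
    (a₀ : A) (ha₀ : a₀ ≠ 1) : GruenbergData p S iB (n + 1) (iA a₀ * w) := by
  classical
  have : Fact p.Prime := ⟨hp⟩
  obtain ⟨⟨Lw, hLS, hLn, rfl⟩, V, _, f, ξ, v, hord, hinv, hvan, hne⟩ := hw
  refine ⟨⟨iA a₀ :: Lw, ?_, by simp [hLn], by simp⟩, ?_⟩
  · intro l hl
    rcases List.mem_cons.1 hl with rfl | h
    · exact hSA _
    · exact hLS _ h
  obtain ⟨P, _, φ, _, hP, hφ⟩ := hA a₀ ha₀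
  obtain ⟨Φ, hΦA, hΦB⟩ := hlift P φ 1
  let δ : P → ZMod p := fun q => if q = 1 then 1 else 0
  let W := (P → ZMod p) × V
  let FA : A →* Function.End W :=
    { toFun := fun a z => (fun q => z.1 (q * φ a) + ξ z.2 * (δ (q * φ a) - δ q), f (iA a) z.2)
      map_one' := by
        funext z
        refine Prod.ext (funext fun q => ?_) ?_
        · simp [Function.End.one_def]
        · simp [Function.End.one_def]
      map_mul' := by
        intro a b
        funext z
        refine Prod.ext (funext fun q => ?_) ?_
        · change _ = (z.1 (q * φ a * φ b) + ξ z.2 * (δ (q * φ a * φ b) - δ (q * φ a))) +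
            ξ (f (iA b) z.2) * (δ (q * φ a) - δ q)
          simp only [hinv, map_mul, mul_assoc]
          ring
        · change f (iA (a * b)) z.2 = f (iA a) (f (iA b) z.2)
          rw [map_mul, map_mul]; rfl }
  let FB : B →* Function.End W :=
    { toFun := fun b z => (z.1, f (iB b) z.2)
      map_one' := by
        funext z
        simp [Function.End.one_def]
      map_mul' := by
        intro a b
        funext z
        change (z.1, f (iB (a * b)) z.2) = (z.1, f (iB a) (f (iB b) z.2))
        rw [map_mul, map_mul]; rfl }
  obtain ⟨F, hFA, hFB⟩ := hlift (Function.End W) FA FB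
  have hA' : ∀ a (z : W), F (iA a) z =
      (fun q => z.1 (q * φ a) + ξ z.2 * (δ (q * φ a) - δ q), f (iA a) z.2) := by
    intro a z; rw [hFA]; rfl
  have hB' : ∀ b (z : W), F (iB b) z = (z.1, f (iB b) z.2) := by
    intro a z; rw [hFB]; rfl
  have hmul : ∀ g h (z : W), F (g * h) z = F g (F h z) := by
    intro g h z; rw [map_mul]; rfl
  have hfmul : ∀ g h (y : V), f (g * h) y = f g (f h y) := by
    intro g h z; rw [map_mul]; rfl
  have hone : ∀ (z : W), F 1 z = z := by
    intro z; rw [map_one]; rfl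
  have hfone : ∀ (z : V), f 1 z = z := by
    intro z; rw [map_one]; rfl
  have hform : ∀ u : G, ∃ τ : V → P → ZMod p, ∀ z : W,
      F u z = (fun q => z.1 (q * Φ u) + τ z.2 q, f u z.2) := by
    apply hgen
    · refine ⟨fun _ _ => 0, fun z => ?_⟩
      rw [hone]; simp [hfone]
    · rintro a g ⟨τ, hτ⟩
      refine ⟨fun y q => τ y (q * φ a) + ξ (f g y) * (δ (q * φ a) - δ q), fun z => ?_⟩
      rw [hmul, hτ, hA', hfmul]
      refine Prod.ext (funext fun q => ?_) rfl
      simp only [map_mul, hΦA, mul_assoc]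
      ring
    · rintro b g ⟨τ, hτ⟩
      refine ⟨τ, fun z => ?_⟩
      rw [hmul, hτ, hB', hfmul]
      refine Prod.ext (funext fun q => ?_) rfl
      simp [hΦB]
  have hvan' : ∀ L : List G, (∀ l ∈ L, l ∈ S) → L.length < n + 1 →
      F L.prod ((0, v) : W) = (0, f L.prod v) := by
    intro L
    induction L with
    | nil => intro _ _; simp [hone, hfone]
    | cons l L ih =>
      intro hl hlen
      simp only [List.length_cons] at hlen
      have hl' : ∀ l ∈ L, l ∈ S := fun x hx => hl x (List.mem_cons_of_mem _ hx)
      rw [List.prod_cons, hmul, ih hl' (by omega), hfmul]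
      rcases hS l (hl l List.mem_cons_self) with ⟨a, rfl⟩ | ⟨b, rfl⟩
      · rw [hA']
        refine Prod.ext (funext fun q => ?_) rfl
        simp [hvan L hl' (by omega)]
      · rw [hB']
  refine ⟨W, inferInstance, F, fun z => z.1 1, (0, v), ?_, ?_, ?_, ?_⟩
  · intro g
    obtain ⟨k₁, h₁⟩ := hP (Φ g)
    obtain ⟨k₂, h₂⟩ := hord g
    set U := g ^ (p ^ (k₁ + k₂)) with hU
    have e1 : Φ U = 1 := by rw [hU, map_pow, pow_add, pow_mul, h₁, one_pow]
    have e2 : f U = 1 := by rw [hU, pow_add, mul_comm, pow_mul, map_pow, h₂, one_pow]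
    obtain ⟨τ, hτ⟩ := hform U
    have hit : ∀ (m : ℕ) (z : W), F (U ^ m) z = (fun q => z.1 q + m * τ z.2 q, z.2) := by
      intro m
      induction m with
      | zero => intro z; simp [hone]
      | succ m ih =>
        intro z
        rw [pow_succ, hmul, hτ, ih]
        have e3 : f U z.2 = z.2 := by rw [e2]; rfl
        refine Prod.ext (funext fun q => ?_) e3
        simp only [e1, e3, mul_one]
        push_cast
        ring
    refine ⟨k₁ + k₂ + 1, ?_⟩
    rw [pow_succ, pow_mul, ← hU]
    funext z
    rw [hit]
    simp [Function.End.one_def]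
  · intro b z
    simp only [hB']
  · intro L hl hlen
    simp only [hvan' L hl hlen]
    rfl
  · simp only [hmul, hvan' Lw hLS (by omega), hA']
    simpa [δ, hφ] using hne

inductive GruenbergRed {G A B : Type*} [Group G] [Group A] [Group B]
    (iA : A →* G) (iB : B →* G) : Bool → G → Prop
  | one (c : Bool) : GruenbergRed iA iB c 1
  | left (a : A) (w : G) : a ≠ 1 → GruenbergRed iA iB true w → GruenbergRed iA iB false (iA a * w)
  | right (b : B) (w : G) : b ≠ 1 → GruenbergRed iA iB false w → GruenbergRed iA iB true (iB b * w)

theorem gruenberg_red {G A B : Type*} [Group G] [Group A] [Group B]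
    (iA : A →* G) (iB : B →* G)
    (hgen : ∀ P : G → Prop, P 1 → (∀ a g, P g → P (iA a * g)) → (∀ b g, P g → P (iB b * g)) →
      ∀ g, P g) (g : G) : ∃ c, GruenbergRed iA iB c g := by
  revert g
  apply hgen
  · exact ⟨true, .one _⟩
  · rintro a g ⟨c, h⟩
    by_cases ha : a = 1
    · subst ha; exact ⟨c, by simpa using h⟩
    cases h with
    | one => exact ⟨_, .left a 1 ha (.one _)⟩
    | left a' w ha' hw =>
      by_cases h1 : a * a' = 1
      · refine ⟨true, ?_⟩
        rw [← mul_assoc, ← map_mul, h1]; simpa using hw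
      · refine ⟨false, ?_⟩
        rw [← mul_assoc, ← map_mul]; exact .left _ _ h1 hw
    | right b w hb hw => exact ⟨_, .left a _ ha (.right b w hb hw)⟩
  · rintro a g ⟨c, h⟩
    by_cases ha : a = 1
    · subst ha; exact ⟨c, by simpa using h⟩
    cases h with
    | one => exact ⟨_, .right a 1 ha (.one _)⟩
    | right a' w ha' hw =>
      by_cases h1 : a * a' = 1
      · refine ⟨false, ?_⟩
        rw [← mul_assoc, ← map_mul, h1]; simpa using hw
      · refine ⟨true, ?_⟩
        rw [← mul_assoc, ← map_mul]; exact .right _ _ h1 hw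
    | left b w hb hw => exact ⟨_, .right a _ ha (.left b w hb hw)⟩

theorem gruenberg_base {p : ℕ} (hp : p.Prime) {G A : Type*} [Group G] [Group A] (S : Set G)
    (iA : A →* G) : GruenbergData p S iA 0 1 := by
  have : Fact p.Prime := ⟨hp⟩
  exact ⟨⟨[], by simp, rfl, rfl⟩, Unit, inferInstance, 1, fun _ => 1, (), fun g => ⟨0, rfl⟩,
    fun _ _ => rfl, fun _ _ h => absurd h (by simp), one_ne_zero⟩

theorem gruenberg_final {p : ℕ} {G A : Type*} [Group G] [Group A] (S : Set G)
    (iA : A →* G) (n : ℕ) (g : G) (hg : g ≠ 1) (h : GruenbergData p S iA n g) :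
    ∃ (Q : Type) (_ : Group Q) (f : G →* Q), Finite Q ∧ IsPGroup p Q ∧ f g ≠ 1 := by
  obtain ⟨⟨L, -, hLn, hL⟩, V, _, f, ξ, v, hord, -, hvan, hne⟩ := h
  have hn : 0 < n := by
    rcases Nat.eq_zero_or_pos n with h0 | h0
    · subst h0
      rw [List.length_eq_zero_iff] at hLn
      subst hLn
      exact absurd hL hg
    · exact h0
  have : Finite (Function.End V) := inferInstanceAs (Finite (V → V))
  let F := f.toHomUnits
  refine ⟨F.range, inferInstance, F.rangeRestrict, inferInstance, ?_, ?_⟩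
  · rintro ⟨_, u, rfl⟩
    obtain ⟨k, hk⟩ := hord u
    refine ⟨k, ?_⟩
    apply Subtype.ext
    apply Units.ext
    simpa [F] using hk
  · intro h1
    have h2 : F g = 1 := congrArg Subtype.val h1
    have h3 : f g = 1 := congrArg Units.val h2
    have h4 := hvan [] (by simp) hn
    apply hne
    rw [h3]
    simpa using h4

theorem stmt_17 (p : ℕ) (hp : p.Prime) (A B : Type*) [Group A] [Group B]
    (hA : ResiduallyFiniteP p A) (hB : ResiduallyFiniteP p B) :
    ResiduallyFiniteP p (Monoid.Coprod A B) := by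
  intro g hg
  let iA : A →* Monoid.Coprod A B := Monoid.Coprod.inl
  let iB : B →* Monoid.Coprod A B := Monoid.Coprod.inr
  have hgen : ∀ P : Monoid.Coprod A B → Prop, P 1 → (∀ a g, P g → P (iA a * g)) →
      (∀ b g, P g → P (iB b * g)) → ∀ g, P g :=
    fun P h1 h2 h3 g => Monoid.Coprod.induction_on' g h1 h2 h3
  have hlift : ∀ (M : Type) [Monoid M] (f : A →* M) (g : B →* M),
      ∃ h : Monoid.Coprod A B →* M, (∀ a, h (iA a) = f a) ∧ (∀ b, h (iB b) = g b) :=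
    fun M _ f g => ⟨Monoid.Coprod.lift f g, fun a => Monoid.Coprod.lift_apply_inl f g a,
      fun b => Monoid.Coprod.lift_apply_inr f g b⟩
  let S : Set (Monoid.Coprod A B) := {g | (∃ a, iA a = g) ∨ (∃ b, iB b = g)}
  have key : ∀ c g, GruenbergRed iA iB c g → ∃ n,
      (c = true → GruenbergData p S iA n g) ∧ (c = false → GruenbergData p S iB n g) := by
    intro c g h
    induction h with
    | one c => exact ⟨0, fun _ => gruenberg_base hp S iA, fun _ => gruenberg_base hp S iB⟩
    | left a w ha _ ih =>
      obtain ⟨n, h, -⟩ := ih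
      exact ⟨n + 1, by simp, fun _ => gruenberg_step hp iA iB S (fun _ h => h)
        (fun a => Or.inl ⟨a, rfl⟩) hlift hgen hA n w (h rfl) a ha⟩
    | right b w hb _ ih =>
      obtain ⟨n, -, h⟩ := ih
      refine ⟨n + 1, fun _ => gruenberg_step hp iB iA S (fun _ h => h.symm)
        (fun a => Or.inr ⟨a, rfl⟩) ?_ ?_ hB n w (h rfl) b hb, by simp⟩
      · intro M _ f g
        obtain ⟨k, h1, h2⟩ := hlift M g f
        exact ⟨k, h2, h1⟩
      · exact fun P h1 h2 h3 => hgen P h1 h3 h2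
  obtain ⟨c, hc⟩ := gruenberg_red iA iB hgen g
  obtain ⟨n, h1, h2⟩ := key c g hc
  cases c
  · exact gruenberg_final S iB n g hg (h2 rfl)
  · exact gruenberg_final S iA n g hg (h1 rfl)
end
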